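/- arXiv:1911.10481 — 4 statements merged into one kernel-verified Lean document; each statement's English description precedes it below -/
import Mathlib

section
/- Let β > 0 and F(k) = (2/3)(2π)⁻³ χ(|k|)² |k| for k ∈ ℝ³. Then lim_{ε→0⁺} ∫_{ℝ³×(0,∞)} F(k) cos(t(|k| − 2β)) e^{−εt} dk dt = π ∫_{|k|=2β} F dμ = (8/(3π)) β³ χ(2β)², where μ is the surface measure on the sphere |k| = 2β. -/
noncomputable section
open MeasureTheory

/-- `F(k) = (2/3)(2π)⁻³ χ(|k|)² |k|`. -/
def F (χ : SchwartzMap ℝ ℝ) (k : EuclideanSpace ℝ (Fin 3)) : ℝ :=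
  (2 / 3) * ((2 * Real.pi) ^ 3)⁻¹ * (χ ‖k‖) ^ 2 * ‖k‖

/-!
Integrating out the time first turns the damped oscillation `cos (t a) e^{-εt}` into the
Lorentzian `ε / (ε² + a²)`, whose mass is `π` and which concentrates at `a = 0` as `ε → 0⁺`.
In polar coordinates the remaining integral over space is a one-dimensional one, of the Lorentzian
centred at `ρ` against the integrals of `f` over the spheres `‖k‖ = r`. These depend continuously
on `r`, so the limit is `π` times the integral of `f` over the sphere `‖k‖ = ρ`.
-/

section Lorentzian

open Set Filter Topology Bornology

/-- The Lorentzian of width `ε`, i.e. the Poisson kernel of the upper half-plane without its factor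
`π⁻¹`: this is the normalisation making it the Laplace transform of `t ↦ cos (t a)` at `ε`, and it
approximates `π` times the Dirac mass at `0` as `ε → 0⁺`. -/
def lorentzian (ε a : ℝ) : ℝ :=
  ε / (ε ^ 2 + a ^ 2)

lemma integral_cos_mul_exp_neg_Ioi (a : ℝ) {ε : ℝ} (hε : 0 < ε) :
    ∫ t in Ioi (0 : ℝ), Real.cos (t * a) * Real.exp (-ε * t) = lorentzian ε a := by
  have hre : ((-ε : ℂ) + a * Complex.I).re < 0 := by simp [hε]
  have hcexp : ∀ t : ℝ, Real.cos (t * a) * Real.exp (-ε * t) =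
      RCLike.re (Complex.exp (((-ε : ℂ) + a * Complex.I) * t)) := by
    intro t
    simp [Complex.exp_re, mul_comm]
  simp_rw [hcexp]
  rw [integral_re (integrableOn_exp_mul_complex_Ioi hre 0), integral_exp_mul_complex_Ioi hre 0]
  simp [lorentzian, Complex.normSq_apply, ← sq, neg_div]

lemma tendsto_abs_mul_inv_one_add_sq_cobounded :
    Tendsto (fun x : ℝ => |x| * (1 + x ^ 2)⁻¹) (cobounded ℝ) (𝓝 0) := by
  have habs : Tendsto (fun x : ℝ => |x|) (cobounded ℝ) atTop := tendsto_norm_cobounded_atTop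
  refine squeeze_zero' (.of_forall fun x => by positivity) ?_ habs.inv_tendsto_atTop
  filter_upwards [habs.eventually_gt_atTop 0] with x hx
  rw [Pi.inv_apply, ← sq_abs, ← div_eq_mul_inv, inv_eq_one_div, div_le_div_iff₀ (by positivity) hx]
  nlinarith

lemma tendsto_integral_lorentzian_smul {V : Type*} [NormedAddCommGroup V] [NormedSpace ℝ V]
    [CompleteSpace V] {g : ℝ → V} (hg : Integrable g) {x₀ : ℝ} (hgx₀ : ContinuousAt g x₀) :
    Tendsto (fun ε : ℝ => ∫ x, lorentzian ε (x - x₀) • g x) (𝓝[>] 0)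
      (𝓝 (Real.pi • g x₀)) := by
  have hmass : ∫ x : ℝ, Real.pi⁻¹ * (1 + x ^ 2)⁻¹ = 1 := by
    rw [integral_const_mul, integral_univ_inv_one_add_sq, inv_mul_cancel₀ Real.pi_ne_zero]
  have hdecay : Tendsto (fun x : ℝ => ‖x‖ ^ Module.finrank ℝ ℝ * (Real.pi⁻¹ * (1 + x ^ 2)⁻¹))
      (cobounded ℝ) (𝓝 0) := by
    simpa [mul_left_comm] using tendsto_abs_mul_inv_one_add_sq_cobounded.const_mul Real.pi⁻¹
  have hpeak := ((tendsto_integral_comp_smul_smul_of_integrable' (fun x => by positivity)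
    hmass hdecay hg hgx₀).comp tendsto_inv_nhdsGT_zero).const_smul Real.pi
  refine hpeak.congr' ?_
  filter_upwards [self_mem_nhdsWithin] with ε (hε : 0 < ε)
  rw [Function.comp_apply, ← integral_smul]
  congr with x
  have hden : ε ^ 2 + (x - x₀) ^ 2 ≠ 0 := by positivity
  rw [smul_smul, Module.finrank_self, smul_eq_mul, lorentzian]
  congr 1
  field_simp
  ring

end Lorentzian

section Damping

open Set

variable {X V : Type*} [MeasurableSpace X] {ν : Measure X} [SFinite ν]
  [NormedAddCommGroup V] [NormedSpace ℝ V]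

lemma integrable_prod_cos_mul_exp_smul {f : X → V} (hf : Integrable f ν) {a : X → ℝ}
    (ha : Measurable a) {ε : ℝ} (hε : 0 < ε) :
    Integrable (fun p : X × ℝ => (Real.cos (p.2 * a p.1) * Real.exp (-ε * p.2)) • f p.1)
      (ν.prod (volume.restrict (Ioi 0))) := by
  have hexp : IntegrableOn (fun t : ℝ => Real.exp (-ε * t)) (Ioi 0) :=
    integrableOn_exp_mul_Ioi (neg_lt_zero.2 hε) 0
  have hdom : Integrable (fun p : X × ℝ => Real.exp (-ε * p.2) • f p.1)
      (ν.prod (volume.restrict (Ioi 0))) := (hexp.smul_prod hf).swap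
  simp_rw [mul_smul]
  refine hdom.bdd_smul 1 (Measurable.aestronglyMeasurable (by fun_prop)) ?_
  exact ae_of_all _ fun p => Real.abs_cos_le_one _

variable [CompleteSpace V]

lemma setIntegral_prod_cos_mul_exp_smul {f : X → V} (hf : Integrable f ν) {a : X → ℝ}
    (ha : Measurable a) {ε : ℝ} (hε : 0 < ε) :
    ∫ p : X × ℝ in univ ×ˢ Ioi (0 : ℝ),
        (Real.cos (p.2 * a p.1) * Real.exp (-ε * p.2)) • f p.1 ∂ν.prod volume =
      ∫ x, lorentzian ε (a x) • f x ∂ν := by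
  rw [← Measure.prod_restrict, Measure.restrict_univ,
    integral_prod _ (integrable_prod_cos_mul_exp_smul hf ha hε)]
  simp_rw [integral_smul_const, integral_cos_mul_exp_neg_Ioi _ hε]

lemma integrable_lorentzian_smul {f : X → V} (hf : Integrable f ν) {a : X → ℝ}
    (ha : Measurable a) {ε : ℝ} (hε : 0 < ε) :
    Integrable (fun x => lorentzian ε (a x) • f x) ν := by
  simpa only [integral_smul_const, integral_cos_mul_exp_neg_Ioi _ hε] using
    (integrable_prod_cos_mul_exp_smul hf ha hε).integral_prod_left

end Damping

section SphereIntegral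

open Set Metric Module Measure

variable {E V : Type*} [NormedAddCommGroup E] [NormedSpace ℝ E] [MeasurableSpace E]
  [NormedAddCommGroup V] [NormedSpace ℝ V]

/-- The surface integral `∫_{‖k‖ = r} f`, written as an integral over the unit sphere for the
measure `μ.toSphere` induced by `μ`, which is the usual surface measure when `μ` is the Lebesgue
measure of a Euclidean space. Only `0 < r` is meaningful. -/
def sphereIntegral (μ : Measure E) (f : E → V) (r : ℝ) : V :=
  r ^ (finrank ℝ E - 1) • ∫ ω : sphere (0 : E) 1, f (r • (ω : E)) ∂μ.toSphere

lemma sphereIntegral_comp_norm_smul (μ : Measure E) (φ : ℝ → ℝ) (f : E → V) {r : ℝ} (hr : 0 ≤ r) :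
    sphereIntegral μ (fun x => φ ‖x‖ • f x) r = φ r • sphereIntegral μ f r := by
  simp [sphereIntegral, norm_smul, abs_of_nonneg hr, integral_smul, smul_comm (φ r)]

lemma integral_volumeIoiPow (n : ℕ) (g : ℝ → V) :
    ∫ r : Ioi (0 : ℝ), g r ∂volumeIoiPow n = ∫ r in Ioi (0 : ℝ), r ^ n • g r := by
  rw [volumeIoiPow, integral_withDensity_eq_integral_toReal_smul (by fun_prop) (by simp),
    integral_subtype_comap measurableSet_Ioi fun r : ℝ => (ENNReal.ofReal (r ^ n)).toReal • g r]
  refine setIntegral_congr_fun measurableSet_Ioi fun r hr => ?_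
  simp only [ENNReal.toReal_ofReal (pow_nonneg (le_of_lt hr) n)]

lemma integrable_volumeIoiPow_iff (n : ℕ) (g : ℝ → V) :
    Integrable (fun r : Ioi (0 : ℝ) => g r) (volumeIoiPow n) ↔
      IntegrableOn (fun r : ℝ => r ^ n • g r) (Ioi 0) := by
  rw [volumeIoiPow, integrable_withDensity_iff_integrable_smul' (by fun_prop) (by simp),
    integrableOn_iff_comap_subtypeVal measurableSet_Ioi]
  refine integrable_congr (ae_of_all _ fun r => ?_)
  simp only [Function.comp_apply, ENNReal.toReal_ofReal (pow_nonneg (le_of_lt r.2) n)]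

variable [BorelSpace E] [FiniteDimensional ℝ E] {μ : Measure E} [μ.IsAddHaarMeasure]

lemma sphereIntegral_comp_norm [CompleteSpace V] (φ : ℝ → V) {r : ℝ} (hr : 0 ≤ r) :
    sphereIntegral μ (fun x => φ ‖x‖) r =
      (r ^ (finrank ℝ E - 1) * (finrank ℝ E * μ.real (ball 0 1))) • φ r := by
  simp [sphereIntegral, norm_smul, abs_of_nonneg hr, smul_smul]

lemma continuous_sphereIntegral {f : E → V} (hf : Continuous f) :
    Continuous (sphereIntegral μ f) := by
  have h := continuous_parametric_integral_of_continuous (μ := μ.toSphere)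
    (f := fun (r : ℝ) (ω : sphere (0 : E) 1) => f (r • (ω : E))) (by fun_prop) isCompact_univ
  rw [Measure.restrict_univ] at h
  exact (continuous_pow _).smul h

variable [Nontrivial E]

variable (μ) in
lemma measurePreserving_polar :
    MeasurePreserving (fun p : sphere (0 : E) 1 × Ioi (0 : ℝ) => (p.2 : ℝ) • (p.1 : E))
      (μ.toSphere.prod (volumeIoiPow (finrank ℝ E - 1))) μ := by
  have hval : MeasurePreserving ((↑) : ({0}ᶜ : Set E) → E) (μ.comap (↑)) μ := by
    simpa only [restrict_compl_singleton] using
      measurePreserving_subtype_coe (μa := μ) (measurableSet_singleton (0 : E)).compl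
  exact hval.comp (MeasurePreserving.symm (homeomorphUnitSphereProd E).toMeasurableEquiv
    μ.measurePreserving_homeomorphUnitSphereProd)

lemma integrable_polar {W : Type*} [NormedAddCommGroup W] {f : E → W} (hf : Integrable f μ) :
    Integrable (fun p : sphere (0 : E) 1 × Ioi (0 : ℝ) => f ((p.2 : ℝ) • (p.1 : E)))
      (μ.toSphere.prod (volumeIoiPow (finrank ℝ E - 1))) :=
  (measurePreserving_polar μ).integrable_comp_of_integrable hf

lemma integrableOn_sphereIntegral {f : E → V} (hf : Integrable f μ) :
    IntegrableOn (sphereIntegral μ f) (Ioi 0) :=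
  (integrable_volumeIoiPow_iff _ _).1 (integrable_polar hf).integral_prod_right

lemma integral_eq_integral_sphereIntegral {f : E → V} (hf : Integrable f μ) :
    ∫ x, f x ∂μ = ∫ r in Ioi (0 : ℝ), sphereIntegral μ f r :=
  calc
    ∫ x, f x ∂μ = ∫ p : sphere (0 : E) 1 × Ioi (0 : ℝ), f ((p.2 : ℝ) • (p.1 : E))
        ∂μ.toSphere.prod (volumeIoiPow (finrank ℝ E - 1)) := by
      have hpolar := measurePreserving_polar μ
      rw [← integral_map hpolar.aemeasurable (hpolar.map_eq.symm ▸ hf.aestronglyMeasurable),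
        hpolar.map_eq]
    _ = ∫ r : Ioi (0 : ℝ), ∫ ω : sphere (0 : E) 1, f ((r : ℝ) • (ω : E)) ∂μ.toSphere
        ∂volumeIoiPow (finrank ℝ E - 1) :=
      integral_prod_symm _ (integrable_polar hf)
    _ = ∫ r in Ioi (0 : ℝ), sphereIntegral μ f r :=
      integral_volumeIoiPow _ fun r => ∫ ω : sphere (0 : E) 1, f (r • (ω : E)) ∂μ.toSphere

lemma integral_comp_norm_smul {φ : ℝ → ℝ} {f : E → V}
    (hf : Integrable (fun x => φ ‖x‖ • f x) μ) :
    ∫ x, φ ‖x‖ • f x ∂μ = ∫ r in Ioi (0 : ℝ), φ r • sphereIntegral μ f r := by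
  rw [integral_eq_integral_sphereIntegral hf]
  exact setIntegral_congr_fun measurableSet_Ioi fun r hr =>
    sphereIntegral_comp_norm_smul μ φ f (le_of_lt hr)

end SphereIntegral

section Resonance

open Set Filter Topology

variable {E V : Type*} [NormedAddCommGroup E] [NormedSpace ℝ E] [MeasurableSpace E]
  [BorelSpace E] [FiniteDimensional ℝ E] [Nontrivial E]
  [NormedAddCommGroup V] [NormedSpace ℝ V] [CompleteSpace V]
  {μ : Measure E} [μ.IsAddHaarMeasure] {f : E → V} {ρ : ℝ}

lemma tendsto_integral_lorentzian_norm_smul (hf : Continuous f) (hfi : Integrable f μ)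
    (hρ : 0 < ρ) :
    Tendsto (fun ε : ℝ => ∫ x, lorentzian ε (‖x‖ - ρ) • f x ∂μ) (𝓝[>] 0)
      (𝓝 (Real.pi • sphereIntegral μ f ρ)) := by
  have hradial : (Ioi 0).indicator (sphereIntegral μ f) =ᶠ[𝓝 ρ] sphereIntegral μ f :=
    eqOn_indicator.eventuallyEq_of_mem (Ioi_mem_nhds hρ)
  have hlim := tendsto_integral_lorentzian_smul
    ((integrable_indicator_iff measurableSet_Ioi).2 (integrableOn_sphereIntegral hfi))
    ((continuous_sphereIntegral hf).continuousAt.congr hradial.symm)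
  rw [hradial.eq_of_nhds] at hlim
  refine hlim.congr' ?_
  filter_upwards [self_mem_nhdsWithin] with ε (hε : 0 < ε)
  rw [integral_comp_norm_smul (φ := fun r => lorentzian ε (r - ρ))
    (integrable_lorentzian_smul hfi (by fun_prop) hε), ← integral_indicator measurableSet_Ioi]
  simp_rw [indicator_smul_apply]

theorem stmt4_general (hf : Continuous f) (hfi : Integrable f μ) (hρ : 0 < ρ) :
    Tendsto
      (fun ε : ℝ => ∫ p : E × ℝ in univ ×ˢ Ioi (0 : ℝ),
        (Real.cos (p.2 * (‖p.1‖ - ρ)) * Real.exp (-ε * p.2)) • f p.1 ∂μ.prod volume)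
      (𝓝[>] 0) (𝓝 (Real.pi • sphereIntegral μ f ρ)) := by
  refine (tendsto_integral_lorentzian_norm_smul hf hfi hρ).congr' ?_
  filter_upwards [self_mem_nhdsWithin] with ε (hε : 0 < ε)
  exact (setIntegral_prod_cos_mul_exp_smul hfi (by fun_prop) hε).symm

end Resonance

section PhotonDensity

open Metric

lemma integrable_pow_mul_schwartzMap_sq (χ : SchwartzMap ℝ ℝ) (n : ℕ) :
    Integrable fun r : ℝ => r ^ n * χ r ^ 2 := by
  have hpow : Integrable fun r : ℝ => r ^ n * χ r := by
    refine (χ.integrable_pow_mul volume n).mono (by fun_prop) (ae_of_all _ fun r => ?_)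
    simp
  simp_rw [sq, ← mul_assoc]
  exact hpow.mul_bdd (by fun_prop) (ae_of_all _ χ.toBoundedContinuousFunction.norm_coe_le_norm)

lemma continuous_F (χ : SchwartzMap ℝ ℝ) : Continuous (F χ) := by
  unfold F
  fun_prop

lemma integrable_F (χ : SchwartzMap ℝ ℝ) : Integrable (F χ) := by
  refine (integrable_fun_norm_addHaar volume
    (f := fun r : ℝ => (2 / 3) * ((2 * Real.pi) ^ 3)⁻¹ * (χ r) ^ 2 * r)).2 ?_
  have h := (integrable_pow_mul_schwartzMap_sq χ 3).const_mul ((2 / 3) * ((2 * Real.pi) ^ 3)⁻¹)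
  refine h.integrableOn.congr_fun (fun r _ => ?_) measurableSet_Ioi
  simp only [finrank_euclideanSpace_fin, smul_eq_mul]
  ring

lemma volume_real_ball_fin_three :
    volume.real (ball (0 : EuclideanSpace ℝ (Fin 3)) 1) = 4 * Real.pi / 3 := by
  rw [measureReal_def, EuclideanSpace.volume_ball_fin_three]
  have hvol : 0 ≤ Real.pi * 4 / 3 := by positivity
  simp [hvol, mul_comm]

lemma pi_smul_sphereIntegral_F (χ : SchwartzMap ℝ ℝ) {β : ℝ} (hβ : 0 ≤ β) :
    Real.pi • sphereIntegral volume (F χ) (2 * β) =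
      (8 / (3 * Real.pi)) * β ^ 3 * (χ (2 * β)) ^ 2 := by
  unfold F
  rw [sphereIntegral_comp_norm (fun r : ℝ => (2 / 3) * ((2 * Real.pi) ^ 3)⁻¹ * (χ r) ^ 2 * r)
    (by positivity), volume_real_ball_fin_three]
  simp only [finrank_euclideanSpace_fin, smul_eq_mul]
  field_simp
  ring

end PhotonDensity

theorem stmt4 (χ : SchwartzMap ℝ ℝ) (β : ℝ) (hβ : 0 < β) :
    Filter.Tendsto
      (fun ε : ℝ =>
        ∫ p : EuclideanSpace ℝ (Fin 3) × ℝ in Set.univ ×ˢ Set.Ioi (0 : ℝ),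
          F χ p.1 * Real.cos (p.2 * (‖p.1‖ - 2 * β)) * Real.exp (-ε * p.2))
      (nhdsWithin 0 (Set.Ioi 0))
      (nhds ((8 / (3 * Real.pi)) * β ^ 3 * (χ (2 * β)) ^ 2)) := by
  rw [← pi_smul_sphereIntegral_F χ hβ.le]
  simpa only [smul_eq_mul, mul_comm, mul_left_comm, mul_assoc, Measure.volume_eq_prod] using
    stmt4_general (continuous_F χ) (integrable_F χ) (mul_pos two_pos hβ)
end
end

section
/- Let β > 0. Then Re d₁ = (8/(3π)) β³ χ(2β)². In particular Re d₁ ≥ 0, and if χ(2β) ≠ 0 (the Fermi Golden Rule hypothesis) then Re d₁ > 0. -/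
noncomputable section
open MeasureTheory Complex

def u (χ : SchwartzMap ℝ ℝ) (t : ℝ) : ℂ :=
  ((2 / (3 * (2 * Real.pi) ^ 3) : ℝ) : ℂ) *
    ∫ k : EuclideanSpace ℝ (Fin 3), (((χ ‖k‖) ^ 2 * ‖k‖ : ℝ) : ℂ) * Complex.exp (-(t * ‖k‖) * Complex.I)

/-- `d_m = ∫₀^∞ u(t) e^{2imβt} dt`. -/
def dcoef (χ : SchwartzMap ℝ ℝ) (β : ℝ) (m : ℤ) : ℂ :=
  ∫ t in Set.Ioi (0 : ℝ), u χ t * Complex.exp (2 * m * β * t * Complex.I)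

/-!
In polar coordinates `u` is, up to scaling, the Fourier transform of `r ↦ r₊³ χ(r)²`, a function
with two integrable derivatives, so `u` is integrable. Since `χ` is real, `u(-t)` is the conjugate
of `u(t)`; hence `Re d_m` is half the integral of `u(t) e^{2imβt}` over the whole line, which
Fourier inversion evaluates.
-/

open Set ComplexConjugate
open scoped FourierTransform SchwartzMap

section Fourier

variable {E : Type*} [NormedAddCommGroup E] [NormedSpace ℂ E]

theorem integrable_fourier_of_integrable_deriv_deriv {f : ℝ → E}
    (hf : Integrable f) (hf' : Integrable (deriv f)) (hf'' : Integrable (deriv (deriv f)))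
    (hd : Differentiable ℝ f) (hd' : Differentiable ℝ (deriv f)) : Integrable (𝓕 f) := by
  have norm_fourier_le (g : ℝ → E) (w : ℝ) : ‖𝓕 g w‖ ≤ ∫ x, ‖g x‖ :=
    VectorFourier.norm_fourierIntegral_le_integral_norm Real.fourierChar _ (innerₗ ℝ) g w
  have continuous_fourier : Continuous (𝓕 f) :=
    VectorFourier.fourierIntegral_continuous Real.continuous_fourierChar
      (L := innerₗ ℝ) continuous_inner hf
  have norm_fourier_deriv_deriv (w : ℝ) :
      ‖𝓕 (deriv (deriv f)) w‖ = (2 * Real.pi * w) ^ 2 * ‖𝓕 f w‖ := by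
    simp only [Real.fourier_deriv hf' hd' hf'', Real.fourier_deriv hf hd hf', smul_smul, norm_smul,
      ← sq, norm_pow]
    simp [mul_pow]
  have integrable_majorant : Integrable fun w : ℝ ↦
      ((∫ x, ‖f x‖) + ∫ x, ‖deriv (deriv f) x‖) * (1 + (2 * Real.pi * w) ^ 2)⁻¹ :=
    (integrable_inv_one_add_sq.comp_mul_left' Real.two_pi_pos.ne').const_mul _
  refine integrable_majorant.mono' continuous_fourier.aestronglyMeasurable (.of_forall fun w ↦ ?_)
  rw [← div_eq_mul_inv, le_div_iff₀ (by positivity)]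
  calc ‖𝓕 f w‖ * (1 + (2 * Real.pi * w) ^ 2)
      = ‖𝓕 f w‖ + ‖𝓕 (deriv (deriv f)) w‖ := by rw [norm_fourier_deriv_deriv]; ring
    _ ≤ _ := add_le_add (norm_fourier_le _ w) (norm_fourier_le _ w)

theorem integrable_exp_smul_fourier {f : ℝ → E} (hf : Integrable (𝓕 f)) (ω : ℝ) :
    Integrable fun t : ℝ ↦ cexp (ω * t * I) • 𝓕 f ((2 * Real.pi)⁻¹ * t) := by
  have hscaled := hf.comp_mul_left' (inv_ne_zero Real.two_pi_pos.ne')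
  refine hscaled.norm.mono' (AEStronglyMeasurable.smul (by fun_prop) hscaled.1)
    (.of_forall fun t ↦ ?_)
  rw [norm_smul, ← ofReal_mul, norm_exp_ofReal_mul_I, one_mul]

theorem integral_exp_smul_fourier [CompleteSpace E] {f : ℝ → E} {ω : ℝ} (hf : Integrable f)
    (hf' : Integrable (𝓕 f)) (hω : ContinuousAt f ω) :
    ∫ t : ℝ, cexp (ω * t * I) • 𝓕 f ((2 * Real.pi)⁻¹ * t) = (2 * Real.pi) • f ω := by
  have hphase (t : ℝ) : 2 * Real.pi * inner ℝ ((2 * Real.pi)⁻¹ * t) ω = ω * t := by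
    simp only [RCLike.inner_apply, conj_trivial]
    field
  calc ∫ t : ℝ, cexp (ω * t * I) • 𝓕 f ((2 * Real.pi)⁻¹ * t)
      = |(2 * Real.pi)⁻¹⁻¹| • ∫ w : ℝ, cexp ((2 * Real.pi * inner ℝ w ω : ℝ) * I) • 𝓕 f w := by
        rw [← Measure.integral_comp_mul_left]
        simp only [hphase, ofReal_mul]
    _ = (2 * Real.pi) • f ω := by
        rw [← Real.fourierInv_eq', hf.fourierInv_fourier_eq hf' hω, inv_inv,
          abs_of_pos Real.two_pi_pos]

end Fourier

theorem hasDerivAt_posPart_pow (n : ℕ) (r : ℝ) :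
    HasDerivAt (fun r : ℝ ↦ r⁺ ^ (n + 2)) ((n + 2) * r⁺ ^ (n + 1)) r := by
  refine hasDerivAt_of_hasDerivAt_of_ne' (x := 0) (g := fun r ↦ (n + 2) * r⁺ ^ (n + 1))
    (fun y hy ↦ ?_) (by fun_prop) (by fun_prop) r
  rcases hy.lt_or_gt with hneg | hpos
  · have hzero : (fun r : ℝ ↦ r⁺ ^ (n + 2)) =ᶠ[nhds y] fun _ ↦ 0 := by
      filter_upwards [gt_mem_nhds hneg] with x hx
      simp [posPart_of_nonpos hx.le]
    simpa [posPart_of_nonpos hneg.le] using (hasDerivAt_const y 0).congr_of_eventuallyEq hzero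
  · have hpow : (fun r : ℝ ↦ r⁺ ^ (n + 2)) =ᶠ[nhds y] fun r ↦ r ^ (n + 2) := by
      filter_upwards [lt_mem_nhds hpos] with x hx
      simp [posPart_of_nonneg hx.le]
    simpa [posPart_of_nonneg hpos.le] using (hasDerivAt_pow (n + 2) y).congr_of_eventuallyEq hpow

section PosPartPowSMul

variable {E : Type*} [NormedAddCommGroup E]

/-- The half-line density `r ↦ r₊ⁿ φ(r)`. Its Fourier transform is the one-sided transform of
`rⁿ φ(r)`; for `n = 0` there is no truncation, as `r₊⁰ = 1`. -/
def posPartPowSMul [NormedSpace ℝ E] (n : ℕ) (φ : 𝓢(ℝ, E)) (r : ℝ) : E := r⁺ ^ n • φ r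

section RealScalars

variable [NormedSpace ℝ E] (n : ℕ) (φ : 𝓢(ℝ, E))

theorem continuous_posPartPowSMul : Continuous (posPartPowSMul n φ) :=
  (continuous_posPart.pow n).smul φ.continuous

theorem integrable_posPartPowSMul : Integrable (posPartPowSMul n φ) := by
  refine (φ.integrable_pow_mul volume n).mono'
    (continuous_posPartPowSMul n φ).aestronglyMeasurable (.of_forall fun r ↦ ?_)
  have hpos : ‖r⁺‖ ≤ ‖r‖ := by
    rw [Real.norm_of_nonneg (posPart_nonneg r)]
    exact sup_le (le_abs_self r) (abs_nonneg r)
  rw [posPartPowSMul, norm_smul, norm_pow]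
  gcongr

theorem hasDerivAt_posPartPowSMul (r : ℝ) :
    HasDerivAt (posPartPowSMul (n + 2) φ)
      (((n : ℝ) + 2) • posPartPowSMul (n + 1) φ r +
        posPartPowSMul (n + 2) (SchwartzMap.derivCLM ℝ E φ) r) r := by
  convert! (hasDerivAt_posPart_pow n r).smul (φ.hasDerivAt r) using 1
  simp only [posPartPowSMul, SchwartzMap.derivCLM_apply, smul_smul, add_comm]

theorem differentiable_posPartPowSMul : Differentiable ℝ (posPartPowSMul (n + 2) φ) :=
  fun r ↦ (hasDerivAt_posPartPowSMul n φ r).differentiableAt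

theorem deriv_posPartPowSMul :
    deriv (posPartPowSMul (n + 2) φ) =
      ((n : ℝ) + 2) • posPartPowSMul (n + 1) φ +
        posPartPowSMul (n + 2) (SchwartzMap.derivCLM ℝ E φ) :=
  funext fun r ↦ (hasDerivAt_posPartPowSMul n φ r).deriv

theorem integrable_deriv_posPartPowSMul : Integrable (deriv (posPartPowSMul (n + 2) φ)) := by
  rw [deriv_posPartPowSMul]
  exact ((integrable_posPartPowSMul _ _).smul _).add (integrable_posPartPowSMul _ _)

theorem differentiable_deriv_posPartPowSMul :
    Differentiable ℝ (deriv (posPartPowSMul (n + 3) φ)) := by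
  rw [deriv_posPartPowSMul (n + 1)]
  exact ((differentiable_posPartPowSMul n φ).const_smul _).add (differentiable_posPartPowSMul _ _)

theorem integrable_deriv_deriv_posPartPowSMul :
    Integrable (deriv (deriv (posPartPowSMul (n + 3) φ))) := by
  have hderiv : deriv (deriv (posPartPowSMul (n + 3) φ)) =
      (((n + 1 : ℕ) : ℝ) + 2) • deriv (posPartPowSMul (n + 2) φ) +
        deriv (posPartPowSMul (n + 3) (SchwartzMap.derivCLM ℝ E φ)) := by
    ext r
    rw [deriv_posPartPowSMul (n + 1), deriv_add
      ((differentiable_posPartPowSMul n φ r).const_smul _) (differentiable_posPartPowSMul _ _ r),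
      deriv_const_smul _ (differentiable_posPartPowSMul n φ r)]
    rfl
  rw [hderiv]
  exact ((integrable_deriv_posPartPowSMul _ _).smul _).add (integrable_deriv_posPartPowSMul _ _)

end RealScalars

variable [NormedSpace ℂ E] (n : ℕ) (φ : 𝓢(ℝ, E))

theorem integrable_fourier_posPartPowSMul : Integrable (𝓕 (posPartPowSMul (n + 3) φ)) :=
  integrable_fourier_of_integrable_deriv_deriv (integrable_posPartPowSMul _ φ)
    (integrable_deriv_posPartPowSMul _ φ) (integrable_deriv_deriv_posPartPowSMul n φ)
    (differentiable_posPartPowSMul _ φ) (differentiable_deriv_posPartPowSMul n φ)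

theorem fourier_posPartPowSMul_succ (t : ℝ) :
    𝓕 (posPartPowSMul (n + 1) φ) ((2 * Real.pi)⁻¹ * t) =
      ∫ r in Ioi (0 : ℝ), r ^ (n + 1) • cexp (-(t * r) * I) • φ r := by
  rw [Real.fourier_eq', ← integral_indicator measurableSet_Ioi]
  congr 1 with r
  have hphase : -2 * Real.pi * inner ℝ r ((2 * Real.pi)⁻¹ * t) = -(t * r) := by
    simp only [RCLike.inner_apply, conj_trivial]
    field
  rcases le_or_gt r 0 with hr | hr
  · simp [posPartPowSMul, posPart_of_nonpos hr, indicator_of_notMem (notMem_Ioi.2 hr)]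
  · rw [hphase, indicator_of_mem (mem_Ioi.2 hr), posPartPowSMul, posPart_of_nonneg hr.le,
      smul_comm]
    push_cast
    rfl

end PosPartPowSMul

theorem integral_comp_norm_euclideanSpace_three {F : Type*} [NormedAddCommGroup F]
    [NormedSpace ℝ F] (f : ℝ → F) :
    ∫ k : EuclideanSpace ℝ (Fin 3), f ‖k‖ = (4 * Real.pi) • ∫ r in Ioi (0 : ℝ), r ^ 2 • f r := by
  have hball : (volume : Measure (EuclideanSpace ℝ (Fin 3))).real (Metric.ball 0 1) =
      Real.pi * 4 / 3 := by
    rw [Measure.real, EuclideanSpace.volume_ball_fin_three, ENNReal.ofReal_one, one_pow, one_mul,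
      ENNReal.toReal_ofReal (by positivity)]
  rw [integral_fun_norm_addHaar, hball, finrank_euclideanSpace_fin, ← Nat.cast_smul_eq_nsmul ℝ,
    smul_smul]
  congr 1
  push_cast
  ring

theorem re_integral_Ioi_of_comp_neg_eq_conj {f : ℝ → ℂ} (hf : Integrable f)
    (hconj : ∀ t, f (-t) = conj (f t)) : (∫ t in Ioi 0, f t).re = (∫ t, f t).re / 2 := by
  have hsplit := intervalIntegral.integral_Iic_add_Ioi (b := 0) hf.integrableOn hf.integrableOn
  have hreflect : conj (∫ t in Ioi 0, f t) = ∫ t in Iic 0, f t := by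
    simpa [hconj, integral_conj] using integral_comp_neg_Ioi 0 f
  rw [← hsplit, ← hreflect, add_re, conj_re, add_self_div_two]

section Cutoff

variable (χ : 𝓢(ℝ, ℝ))

/-- The squared cutoff `χ²`, as a complex-valued Schwartz function so that it has a Fourier
transform. -/
def cutoffSq : 𝓢(ℝ, ℂ) :=
  SchwartzMap.postcompCLM ofRealCLM (SchwartzMap.pairing (ContinuousLinearMap.mul ℝ ℝ) χ χ)

theorem cutoffSq_apply (r : ℝ) : cutoffSq χ r = (χ r : ℂ) ^ 2 := by
  simp [cutoffSq, sq]

theorem u_eq_fourier (t : ℝ) :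
    u χ t = (3 * Real.pi ^ 2)⁻¹ •
      𝓕 (posPartPowSMul 3 (cutoffSq χ)) ((2 * Real.pi)⁻¹ * t) := by
  have hpolar : ∫ k : EuclideanSpace ℝ (Fin 3), ((χ ‖k‖ ^ 2 * ‖k‖ : ℝ) : ℂ) *
      cexp (-(t * ‖k‖) * I) =
        (4 * Real.pi) • 𝓕 (posPartPowSMul 3 (cutoffSq χ)) ((2 * Real.pi)⁻¹ * t) := by
    rw [integral_comp_norm_euclideanSpace_three
      fun r ↦ ((χ r ^ 2 * r : ℝ) : ℂ) * cexp (-(t * r) * I), fourier_posPartPowSMul_succ]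
    congr 2 with r
    simp only [cutoffSq_apply, smul_eq_mul, real_smul]
    push_cast
    ring
  rw [u, hpolar, ← real_smul, smul_smul]
  congr 1
  field

theorem u_mul_exp_eq_smul_fourier (ω t : ℝ) :
    u χ t * cexp (ω * t * I) = (3 * Real.pi ^ 2)⁻¹ •
      (cexp (ω * t * I) • 𝓕 (posPartPowSMul 3 (cutoffSq χ)) ((2 * Real.pi)⁻¹ * t)) := by
  rw [u_eq_fourier, smul_mul_assoc, smul_eq_mul, mul_comm (cexp _)]

theorem u_neg (t : ℝ) : u χ (-t) = conj (u χ t) := by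
  rw [u, u, map_mul, conj_ofReal, ← integral_conj]
  simp [← exp_conj]

theorem integrable_u_mul_exp (ω : ℝ) : Integrable fun t ↦ u χ t * cexp (ω * t * I) := by
  simp only [u_mul_exp_eq_smul_fourier]
  exact (integrable_exp_smul_fourier (integrable_fourier_posPartPowSMul 0 (cutoffSq χ)) ω).smul
    (3 * Real.pi ^ 2)⁻¹

theorem integral_u_mul_exp (ω : ℝ) :
    ∫ t, u χ t * cexp (ω * t * I) = ((2 / (3 * Real.pi) * ω⁺ ^ 3 * χ ω ^ 2 : ℝ) : ℂ) := by
  simp only [u_mul_exp_eq_smul_fourier]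
  rw [integral_smul, integral_exp_smul_fourier (integrable_posPartPowSMul _ _)
    (integrable_fourier_posPartPowSMul 0 _) (continuous_posPartPowSMul _ _).continuousAt,
    posPartPowSMul, cutoffSq_apply, smul_smul, smul_smul, real_smul, ← ofReal_pow, ← ofReal_mul]
  congr 2
  field

theorem re_integral_Ioi_u_mul_exp (ω : ℝ) :
    (∫ t in Ioi 0, u χ t * cexp (ω * t * I)).re = 1 / (3 * Real.pi) * ω⁺ ^ 3 * χ ω ^ 2 := by
  rw [re_integral_Ioi_of_comp_neg_eq_conj (integrable_u_mul_exp χ ω), integral_u_mul_exp,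
    ofReal_re]
  · ring
  · intro t
    simp [u_neg, ← exp_conj]

end Cutoff

theorem stmt6_general (χ : SchwartzMap ℝ ℝ) (β : ℝ) (m : ℤ) :
    (dcoef χ β m).re = 8 / (3 * Real.pi) * (m * β)⁺ ^ 3 * χ (2 * (m * β)) ^ 2 := by
  have hdcoef : dcoef χ β m = ∫ t in Ioi 0, u χ t * cexp ((2 * (m * β) : ℝ) * t * I) := by
    simp [dcoef, mul_assoc]
  have hposPart : (2 * (m * β))⁺ = 2 * (m * β)⁺ := by
    simp [posPart_def, mul_max_of_nonneg]
  rw [hdcoef, re_integral_Ioi_u_mul_exp, hposPart]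
  ring

theorem stmt6 (χ : SchwartzMap ℝ ℝ) (β : ℝ) (hβ : 0 < β) :
    (dcoef χ β 1).re = (8 / (3 * Real.pi)) * β ^ 3 * (χ (2 * β)) ^ 2 ∧
      0 ≤ (dcoef χ β 1).re ∧
      (χ (2 * β) ≠ 0 → 0 < (dcoef χ β 1).re) := by
  rw [show (dcoef χ β 1).re = _ by simpa [posPart_of_nonneg hβ.le] using stmt6_general χ β 1]
  exact ⟨rfl, by positivity, fun hχ ↦ by positivity⟩
end
end

section
/- Let β > 0. Then Re d₀ = 0 and Re d₋₁ = 0. -/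
noncomputable section
open MeasureTheory Complex

/-!
In polar coordinates `u` is, up to a constant and a rescaling, the Fourier transform of the real
function `f(r) = r₊³ χ(r)²`, which vanishes on `(-∞, 0]`. Since `f` is real, the integrand of the
inversion integral takes conjugate values at `±t`, so the half-line integral defining `d_m` has as
real part one half of the inversion integral over the whole line, hence a multiple of `f(2mβ)`.
The factor `r₊³` makes `f` twice differentiable with integrable derivatives, so its Fourier
transform decays like `w⁻²` and all these integrals converge absolutely.
-/

open Set
open scoped ComplexConjugate FourierTransform Real SchwartzMap

lemma integral_eq_two_mul_re_integral_Ioi {𝕜 : Type*} [RCLike 𝕜] {g : ℝ → 𝕜}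
    (hg : Integrable g) (hconj : ∀ t, g (-t) = conj (g t)) :
    ∫ t, g t = 2 * (RCLike.re (∫ t in Ioi 0, g t) : 𝕜) := by
  have hIic : ∫ t in Iic 0, g t = conj (∫ t in Ioi 0, g t) := by
    rw [← integral_conj, ← neg_zero, ← integral_comp_neg_Ioi, neg_zero]
    simp only [hconj]
  rw [← intervalIntegral.integral_Iic_add_Ioi hg.integrableOn hg.integrableOn, hIic, add_comm,
    RCLike.add_conj]

lemma fourier_ofReal_neg (f : ℝ → ℝ) (w : ℝ) :
    𝓕 (fun y ↦ (f y : ℂ)) (-w) = conj (𝓕 (fun y ↦ (f y : ℂ)) w) := by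
  simp only [Real.fourier_real_eq_integral_exp_smul, ← integral_conj, smul_eq_mul, map_mul,
    ← Complex.exp_conj, conj_ofReal, conj_I, mul_neg, ofReal_neg, neg_mul, map_neg]

theorem re_integral_Ioi_exp_mul_fourier {f : ℝ → ℝ} {x : ℝ} (hx : ContinuousAt f x)
    (hf : Integrable f) (hF : Integrable (𝓕 fun y ↦ (f y : ℂ))) :
    (∫ w in Ioi (0 : ℝ), exp (↑(2 * π * (w * x)) * I) * 𝓕 (fun y ↦ (f y : ℂ)) w).re
      = f x / 2 := by
  set g : ℝ → ℂ := fun w ↦ exp (↑(2 * π * (w * x)) * I) * 𝓕 (fun y ↦ (f y : ℂ)) w with g_def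
  have g_integrable : Integrable g :=
    hF.bdd_mul (c := 1) (Continuous.aestronglyMeasurable (by fun_prop))
      (.of_forall fun w ↦ (norm_exp_ofReal_mul_I _).le)
  have g_neg (w : ℝ) : g (-w) = conj (g w) := by
    simp only [g_def, fourier_ofReal_neg, map_mul, ← Complex.exp_conj, conj_ofReal, conj_I,
      neg_mul, mul_neg, ofReal_neg]
  have inversion : ∫ w, g w = f x := by
    have h := hf.ofReal.fourierInv_fourier_eq hF (continuous_ofReal.continuousAt.comp hx)
    simpa only [Real.fourierInv_eq', RCLike.inner_apply, conj_trivial, smul_eq_mul,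
      mul_comm x] using h
  have key : (f x : ℂ) = ((2 * (∫ w in Ioi (0 : ℝ), g w).re : ℝ) : ℂ) := by
    rw [← inversion, integral_eq_two_mul_re_integral_Ioi g_integrable g_neg]
    push_cast
    rfl
  linarith [ofReal_injective key]

section FourierDecay

variable {E : Type*} [NormedAddCommGroup E] [NormedSpace ℂ E]

lemma norm_fourier_le_integral_norm (f : ℝ → E) (w : ℝ) : ‖𝓕 f w‖ ≤ ∫ x, ‖f x‖ :=
  VectorFourier.norm_fourierIntegral_le_integral_norm _ _ _ _ _

lemma fourier_of_hasDerivAt {f f' : ℝ → E} (hf : Integrable f) (hf' : Integrable f')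
    (hderiv : ∀ x, HasDerivAt f (f' x) x) (w : ℝ) :
    𝓕 f' w = (2 * π * I * w) • 𝓕 f w := by
  have heq : deriv f = f' := deriv_eq hderiv
  rw [← heq] at hf' ⊢
  rw [Real.fourier_deriv hf (fun x ↦ (hderiv x).differentiableAt) hf']

theorem integrable_fourier_of_hasDerivAt_of_hasDerivAt {f f' f'' : ℝ → E}
    (hf : Integrable f) (hf' : Integrable f') (hf'' : Integrable f'')
    (hderiv : ∀ x, HasDerivAt f (f' x) x) (hderiv' : ∀ x, HasDerivAt f' (f'' x) x) :
    Integrable (𝓕 f) := by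
  have decay (w : ℝ) : w ^ 2 * ‖𝓕 f w‖ ≤ ∫ x, ‖f'' x‖ := by
    have h2π : 1 ≤ (2 * π) ^ 2 := one_le_pow₀ (by linarith [Real.two_le_pi])
    calc w ^ 2 * ‖𝓕 f w‖ ≤ (2 * π) ^ 2 * (w ^ 2 * ‖𝓕 f w‖) :=
          le_mul_of_one_le_left (by positivity) h2π
      _ = ‖𝓕 f'' w‖ := by
          rw [fourier_of_hasDerivAt hf' hf'' hderiv', fourier_of_hasDerivAt hf hf' hderiv]
          simp only [norm_smul, norm_mul, norm_I, RCLike.norm_ofNat, norm_real, Real.norm_eq_abs,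
            abs_of_pos Real.pi_pos]
          rw [← sq_abs w]
          ring
      _ ≤ ∫ x, ‖f'' x‖ := norm_fourier_le_integral_norm f'' w
  have hcont : Continuous (𝓕 f) :=
    VectorFourier.fourierIntegral_continuous Real.continuous_fourierChar (by fun_prop) hf
  refine (integrable_inv_one_add_sq.const_mul ((∫ x, ‖f x‖) + ∫ x, ‖f'' x‖)).mono'
    hcont.aestronglyMeasurable (.of_forall fun w ↦ ?_)
  rw [← div_eq_mul_inv, le_div_iff₀ (by positivity)]
  linarith [decay w, norm_fourier_le_integral_norm f w]

end FourierDecay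

section TruncatedPower

variable {F : Type*} [NormedAddCommGroup F] [NormedSpace ℝ F]

/-- The Schwartz function `φ` weighted by the truncated power `x₊ⁿ`, the model of a function
supported on `[0, ∞)` with finite smoothness at the origin. For `n = 0` nothing is truncated, since
`0 ^ 0 = 1`. -/
def truncPowSMul (n : ℕ) (φ : 𝓢(ℝ, F)) (x : ℝ) : F := max x 0 ^ n • φ x

lemma continuous_truncPowSMul (n : ℕ) (φ : 𝓢(ℝ, F)) : Continuous (truncPowSMul n φ) := by
  unfold truncPowSMul
  fun_prop

lemma integrable_truncPowSMul (n : ℕ) (φ : 𝓢(ℝ, F)) : Integrable (truncPowSMul n φ) := by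
  refine (φ.integrable_pow_mul volume n).mono'
    (continuous_truncPowSMul n φ).aestronglyMeasurable (.of_forall fun x ↦ ?_)
  have hmax : ‖max x 0‖ ≤ ‖x‖ := by
    rw [Real.norm_of_nonneg (le_max_right x 0)]
    exact max_le (le_abs_self x) (abs_nonneg x)
  rw [truncPowSMul, norm_smul, norm_pow]
  gcongr

lemma hasDerivAt_max_zero_pow (n : ℕ) (x : ℝ) :
    HasDerivAt (fun y : ℝ ↦ max y 0 ^ (n + 2)) ((n + 2) * max x 0 ^ (n + 1)) x := by
  refine hasDerivAt_of_hasDerivAt_of_ne' (x := 0) (g := fun y ↦ (n + 2) * max y 0 ^ (n + 1))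
    (fun y hy ↦ ?_) (by fun_prop) (by fun_prop) x
  rcases hy.lt_or_gt with hy | hy
  · simpa [hy.le] using! (hasDerivAt_const y (0 : ℝ)).congr_of_eventuallyEq
      (f₁ := fun z ↦ max z 0 ^ (n + 2))
      ((eventually_lt_nhds hy).mono fun z hz ↦ by simp [hz.le])
  · simpa [hy.le] using! (hasDerivAt_pow (n + 2) y).congr_of_eventuallyEq
      (f₁ := fun z ↦ max z 0 ^ (n + 2))
      ((eventually_gt_nhds hy).mono fun z hz ↦ by simp [hz.le])

lemma exists_hasDerivAt_truncPowSMul (n : ℕ) (φ : 𝓢(ℝ, F)) :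
    ∃ ψ : 𝓢(ℝ, F), ∀ x, HasDerivAt (truncPowSMul (n + 2) φ) (truncPowSMul (n + 1) ψ x) x := by
  -- Since `x₊ⁿ⁺² = x₊ⁿ⁺¹ x`, both terms of the product rule contain the factor `x₊ⁿ⁺¹`.
  let ψ : 𝓢(ℝ, F) := (n + 2 : ℝ) • φ +
    SchwartzMap.smulLeftCLM F (fun x : ℝ ↦ x) (SchwartzMap.derivCLM ℝ F φ)
  have ψ_apply (x : ℝ) : ψ x = (n + 2 : ℝ) • φ x + x • deriv φ x := by
    simp only [ψ, add_apply, smul_apply, SchwartzMap.derivCLM_apply,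
      SchwartzMap.smulLeftCLM_apply_apply Function.HasTemperateGrowth.id']
  refine ⟨ψ, fun x ↦ ((hasDerivAt_max_zero_pow n x).smul (φ.hasDerivAt x)).congr_deriv ?_⟩
  have hpow : max x 0 ^ (n + 2) = max x 0 ^ (n + 1) * x := by
    rcases le_total x 0 with hx | hx <;> simp [hx, pow_succ]
  rw [truncPowSMul, ψ_apply, hpow]
  module

theorem integrable_fourier_truncPowSMul {E : Type*} [NormedAddCommGroup E] [NormedSpace ℂ E]
    (n : ℕ) (φ : 𝓢(ℝ, E)) : Integrable (𝓕 (truncPowSMul (n + 3) φ)) := by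
  obtain ⟨ψ, hψ⟩ := exists_hasDerivAt_truncPowSMul (n + 1) φ
  obtain ⟨θ, hθ⟩ := exists_hasDerivAt_truncPowSMul n ψ
  exact integrable_fourier_of_hasDerivAt_of_hasDerivAt (integrable_truncPowSMul _ φ)
    (integrable_truncPowSMul _ ψ) (integrable_truncPowSMul _ θ) hψ hθ

end TruncatedPower

lemma integral_fun_norm_euclideanSpace_fin_three {F : Type*} [NormedAddCommGroup F]
    [NormedSpace ℝ F] (f : ℝ → F) :
    ∫ k : EuclideanSpace ℝ (Fin 3), f ‖k‖ = (4 * π) • ∫ r in Ioi (0 : ℝ), r ^ 2 • f r := by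
  have ball_volume : volume.real (Metric.ball (0 : EuclideanSpace ℝ (Fin 3)) 1) = π * 4 / 3 := by
    rw [measureReal_def, EuclideanSpace.volume_ball_fin_three, ENNReal.ofReal_one, one_pow,
      one_mul, ENNReal.toReal_ofReal (by positivity)]
  rw [integral_fun_norm_addHaar volume f, ball_volume, finrank_euclideanSpace_fin,
    ← Nat.cast_smul_eq_nsmul ℝ, smul_smul]
  congr 1
  push_cast
  ring

/-- The density `r₊³ χ(r)²` of field modes at frequency `r`: up to a constant and a rescaling,
`u` is its Fourier transform. Truncating at `0` turns the half-line integral over `r = |k|` into one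
over `ℝ`. -/
def spectralDensity (χ : 𝓢(ℝ, ℝ)) (r : ℝ) : ℝ := max r 0 ^ 3 * χ r ^ 2

section SpectralDensity

variable (χ : 𝓢(ℝ, ℝ))

lemma exists_truncPowSMul_eq_spectralDensity :
    ∃ φ : 𝓢(ℝ, ℝ), truncPowSMul 3 φ = spectralDensity χ :=
  ⟨SchwartzMap.pairing (ContinuousLinearMap.mul ℝ ℝ) χ χ, by
    ext r
    simp [truncPowSMul, spectralDensity, SchwartzMap.pairing_apply_apply, sq]⟩

lemma continuous_spectralDensity : Continuous (spectralDensity χ) := by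
  obtain ⟨φ, hφ⟩ := exists_truncPowSMul_eq_spectralDensity χ
  exact hφ ▸ continuous_truncPowSMul 3 φ

lemma integrable_spectralDensity : Integrable (spectralDensity χ) := by
  obtain ⟨φ, hφ⟩ := exists_truncPowSMul_eq_spectralDensity χ
  exact hφ ▸ integrable_truncPowSMul 3 φ

lemma integrable_fourier_spectralDensity :
    Integrable (𝓕 fun r ↦ (spectralDensity χ r : ℂ)) := by
  obtain ⟨φ, hφ⟩ := exists_truncPowSMul_eq_spectralDensity χ
  convert integrable_fourier_truncPowSMul 0 (φ.postcompCLM ofRealCLM) using 2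
  ext r
  simp [← hφ, truncPowSMul]

lemma fourier_spectralDensity (w : ℝ) :
    𝓕 (fun r ↦ (spectralDensity χ r : ℂ)) w
      = ∫ r in Ioi (0 : ℝ), exp (↑(-2 * π * r * w) * I) * ↑(r ^ 3 * χ r ^ 2) := by
  rw [Real.fourier_real_eq_integral_exp_smul, ← setIntegral_eq_integral_of_forall_compl_eq_zero]
  · refine setIntegral_congr_fun measurableSet_Ioi fun r (hr : 0 < r) ↦ ?_
    simp only [spectralDensity, max_eq_left hr.le, smul_eq_mul]
  · intro r (hr : ¬ 0 < r)
    simp [spectralDensity, max_eq_right (not_lt.mp hr)]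

lemma u_two_pi_mul (w : ℝ) :
    u χ (2 * π * w) = (1 / (3 * π ^ 2) : ℝ) * 𝓕 (fun r ↦ (spectralDensity χ r : ℂ)) w := by
  have radial (r : ℝ) : r ^ 2 • (((χ r ^ 2 * r : ℝ) : ℂ) * exp (-(↑(2 * π * w) * r) * I))
      = exp (↑(-2 * π * r * w) * I) * ↑(r ^ 3 * χ r ^ 2) := by
    rw [real_smul]
    push_cast
    ring_nf
  rw [u, integral_fun_norm_euclideanSpace_fin_three
    (fun r ↦ ((χ r ^ 2 * r : ℝ) : ℂ) * exp (-(↑(2 * π * w) * r) * I))]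
  simp only [radial]
  rw [← fourier_spectralDensity, real_smul, ← mul_assoc, ← ofReal_mul]
  congr 2
  field_simp
  norm_num

lemma dcoef_eq_integral_fourier_spectralDensity (β : ℝ) (m : ℤ) :
    dcoef χ β m = (2 / (3 * π) : ℝ) * ∫ w in Ioi (0 : ℝ),
      exp (↑(2 * π * (w * (2 * m * β))) * I) * 𝓕 (fun r ↦ (spectralDensity χ r : ℂ)) w := by
  have rescale := integral_comp_mul_left_Ioi'
    (fun t ↦ u χ t * exp (2 * m * β * t * I)) 0 Real.two_pi_pos
  rw [mul_zero] at rescale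
  rw [dcoef, ← rescale, real_smul, ← integral_const_mul, ← integral_const_mul]
  congr with w
  rw [u_two_pi_mul]
  push_cast
  field_simp

end SpectralDensity

theorem stmt7_general (χ : 𝓢(ℝ, ℝ)) (β : ℝ) (m : ℤ) :
    (dcoef χ β m).re = max (2 * m * β) 0 ^ 3 * χ (2 * m * β) ^ 2 / (3 * π) := by
  rw [dcoef_eq_integral_fourier_spectralDensity, re_ofReal_mul,
    re_integral_Ioi_exp_mul_fourier (continuous_spectralDensity χ).continuousAt
      (integrable_spectralDensity χ) (integrable_fourier_spectralDensity χ), spectralDensity]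
  ring

theorem stmt7 (χ : SchwartzMap ℝ ℝ) (β : ℝ) (hβ : 0 < β) :
    (dcoef χ β 0).re = 0 ∧ (dcoef χ β (-1)).re = 0 := by
  simp [stmt7_general, hβ.le]
end
end

section
/- Let d₁, d₀, d₋₁ be complex numbers with Re d₀ = 0 and Re d₋₁ = 0, and let L be the GKLS operator built from them. Then L(σ(−1)) = (−Re d₁ − i(Im d₁ − Im d₋₁)) σ(−1). -/
noncomputable section
open Complex

def σ1 : Matrix (Fin 2) (Fin 2) ℂ := !![0, 1; 1, 0]
def σ2 : Matrix (Fin 2) (Fin 2) ℂ := !![0, -Complex.I; Complex.I, 0]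
def σ3 : Matrix (Fin 2) (Fin 2) ℂ := !![1, 0; 0, -1]

/-- `σ(m)` for `m ∈ {1, 0, -1}`. -/
def pσ (m : ℤ) : Matrix (Fin 2) (Fin 2) ℂ :=
  if m = 1 then ((Real.sqrt 2 : ℂ))⁻¹ • (σ1 + Complex.I • σ2)
  else if m = 0 then σ3
  else ((Real.sqrt 2 : ℂ))⁻¹ • (σ1 - Complex.I • σ2)

/-- `H_L = Σ_m (Im d_m) σ(m)σ(−m)`. -/
def HL (d1 d0 dm1 : ℂ) : Matrix (Fin 2) (Fin 2) ℂ :=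
  (d1.im : ℂ) • (pσ 1 * pσ (-1)) + (d0.im : ℂ) • (pσ 0 * pσ 0) +
    (dm1.im : ℂ) • (pσ (-1) * pσ 1)

/-- The GKLS operator built from `d₁, d₀, d₋₁`. -/
def Lop (d1 d0 dm1 : ℂ) (A : Matrix (Fin 2) (Fin 2) ℂ) : Matrix (Fin 2) (Fin 2) ℂ :=
  (d1.re : ℂ) • (pσ 1 * A * pσ (-1) -
      (2 : ℂ)⁻¹ • (A * (pσ 1 * pσ (-1)) + (pσ 1 * pσ (-1)) * A)) +
    (d0.re : ℂ) • (pσ 0 * A * pσ 0 -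
      (2 : ℂ)⁻¹ • (A * (pσ 0 * pσ 0) + (pσ 0 * pσ 0) * A)) +
    (dm1.re : ℂ) • (pσ (-1) * A * pσ 1 -
      (2 : ℂ)⁻¹ • (A * (pσ (-1) * pσ 1) + (pσ (-1) * pσ 1) * A)) -
    (Complex.I / 2) • (A * HL d1 d0 dm1 - HL d1 d0 dm1 * A)

/-!
The relations `σ(-1)² = 0`, `σ(-1) σ(1) σ(-1) = 2 σ(-1)`, `σ(0)² = 1` and
`σ(0) σ(-1) = -σ(-1) σ(0)` make `σ(-1)` an eigenvector of each of the three dissipators, with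
eigenvalues `-1`, `-2`, `-1` for `m = 1, 0, -1`, and of the commutator with `H_L`, hence of `L`.
-/

section Commutator

variable {R : Type*} [Ring R] {W : R}

theorem lie_mul_right_of_mul_self_eq_zero (hW : W * W = 0) (V : R) : ⁅W, V * W⁆ = W * V * W := by
  rw [Ring.lie_def, mul_assoc V, hW, mul_zero, sub_zero, mul_assoc]

theorem lie_mul_left_of_mul_self_eq_zero (hW : W * W = 0) (V : R) :
    ⁅W, W * V⁆ = -(W * V * W) := by
  rw [Ring.lie_def, ← mul_assoc, hW, zero_mul, zero_sub]

end Commutator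

section Dissipator

variable (𝕜 : Type*) {R : Type*} [Field 𝕜] [Ring R] [Algebra 𝕜 R]

/-- The dissipator with jump operator `V`, in the form `A ↦ V A V* - ½ {V V*, A}`. The adjoint `V*`
is passed as a separate argument `W`, so that no star structure on the algebra is required. -/
def dissipator (V W A : R) : R :=
  V * A * W - (2 : 𝕜)⁻¹ • (A * (V * W) + V * W * A)

variable {𝕜} {V W A : R}

theorem dissipator_apply_right_of_mul_self_eq_zero (hW : W * W = 0) (V : R) :
    dissipator 𝕜 V W W = -(2 : 𝕜)⁻¹ • (W * V * W) := by
  have hVWW : V * W * W = 0 := by rw [mul_assoc, hW, mul_zero]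
  rw [dissipator, hVWW, add_zero, zero_sub, ← mul_assoc, neg_smul]

theorem dissipator_apply_left_of_mul_self_eq_zero (hW : W * W = 0) (V : R) :
    dissipator 𝕜 W V W = -(2 : 𝕜)⁻¹ • (W * V * W) := by
  have hWWV : W * (W * V) = 0 := by rw [← mul_assoc, hW, zero_mul]
  rw [dissipator, hW, zero_mul, hWWV, zero_add, zero_sub, neg_smul]

theorem dissipator_self_apply_of_anticommute [NeZero (2 : 𝕜)] (hVA : V * A = -(A * V)) :
    dissipator 𝕜 V V A = -(2 : 𝕜) • (A * (V * V)) := by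
  have hVAV : V * A * V = -(A * (V * V)) := by rw [hVA, neg_mul, mul_assoc]
  have hVVA : V * V * A = A * (V * V) := by rw [mul_assoc, hVA, mul_neg, ← mul_assoc, hVAV, neg_neg]
  have h2 : (2 : 𝕜) ≠ 0 := NeZero.ne 2
  rw [dissipator, hVAV, hVVA, ← two_smul 𝕜 (A * (V * V)), inv_smul_smul₀ h2]
  module

end Dissipator

theorem ofReal_sqrt_two_mul_self : (√2 : ℂ) * (√2 : ℂ) = 2 := by
  exact_mod_cast Real.mul_self_sqrt zero_le_two

theorem inv_ofReal_sqrt_two_mul_two : (√2 : ℂ)⁻¹ * 2 = √2 := by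
  rw [← ofReal_sqrt_two_mul_self, inv_mul_cancel_left₀ (by simp)]

theorem pσ_one : pσ 1 = Matrix.single 0 1 (√2 : ℂ) := by
  have hσ : σ1 + I • σ2 = Matrix.single 0 1 2 := by
    ext i j
    fin_cases i <;> fin_cases j <;> simp [σ1, σ2, one_add_one_eq_two]
  rw [pσ, if_pos rfl, hσ, Matrix.smul_single, smul_eq_mul, inv_ofReal_sqrt_two_mul_two]

theorem pσ_neg_one : pσ (-1) = Matrix.single 1 0 (√2 : ℂ) := by
  have hσ : σ1 - I • σ2 = Matrix.single 1 0 2 := by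
    ext i j
    fin_cases i <;> fin_cases j <;> simp [σ1, σ2, one_add_one_eq_two]
  rw [pσ, if_neg (by decide), if_neg (by decide), hσ, Matrix.smul_single, smul_eq_mul,
    inv_ofReal_sqrt_two_mul_two]

theorem pσ_zero : pσ 0 = Matrix.diagonal ![1, -1] :=
  (Matrix.diagonal_vec2 1 (-1)).symm

theorem pσ_neg_one_mul_self : pσ (-1) * pσ (-1) = 0 := by
  simp [pσ_neg_one]

theorem pσ_neg_one_mul_pσ_one_mul_pσ_neg_one :
    pσ (-1) * pσ 1 * pσ (-1) = (2 : ℂ) • pσ (-1) := by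
  simp [pσ_one, pσ_neg_one, ofReal_sqrt_two_mul_self]

theorem pσ_zero_mul_self : pσ 0 * pσ 0 = 1 := by
  simp [pσ_zero, Matrix.one_fin_two, Matrix.diagonal_fin_two]

theorem pσ_zero_mul_pσ_neg_one : pσ 0 * pσ (-1) = -(pσ (-1) * pσ 0) := by
  ext i j
  fin_cases i <;> fin_cases j <;> simp [pσ_zero, pσ_neg_one]

theorem Lop_eq_dissipator_sub_lie (d1 d0 dm1 : ℂ) (A : Matrix (Fin 2) (Fin 2) ℂ) :
    Lop d1 d0 dm1 A =
      (d1.re : ℂ) • dissipator ℂ (pσ 1) (pσ (-1)) A +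
        (d0.re : ℂ) • dissipator ℂ (pσ 0) (pσ 0) A +
        (dm1.re : ℂ) • dissipator ℂ (pσ (-1)) (pσ 1) A -
        (I / 2) • ⁅A, HL d1 d0 dm1⁆ :=
  rfl

attribute [local instance] LieRing.ofAssociativeRing in
theorem lie_pσ_neg_one_HL (d1 d0 dm1 : ℂ) :
    ⁅pσ (-1), HL d1 d0 dm1⁆ = (2 * ((d1.im : ℂ) - dm1.im)) • pσ (-1) := by
  have h_lie_one : ⁅pσ (-1), (1 : Matrix (Fin 2) (Fin 2) ℂ)⁆ = 0 := (Commute.one_right _).lie_eq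
  rw [HL, pσ_zero_mul_self, lie_add, lie_add, lie_smul, lie_smul, lie_smul, h_lie_one,
    lie_mul_right_of_mul_self_eq_zero pσ_neg_one_mul_self,
    lie_mul_left_of_mul_self_eq_zero pσ_neg_one_mul_self, pσ_neg_one_mul_pσ_one_mul_pσ_neg_one]
  module

theorem stmt10_general (d1 d0 dm1 : ℂ) :
    Lop d1 d0 dm1 (pσ (-1)) =
      (-((d1.re : ℂ) + 2 * d0.re + dm1.re) - I * ((d1.im : ℂ) - dm1.im)) • pσ (-1) := by
  rw [Lop_eq_dissipator_sub_lie,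
    dissipator_apply_right_of_mul_self_eq_zero pσ_neg_one_mul_self,
    dissipator_apply_left_of_mul_self_eq_zero pσ_neg_one_mul_self,
    pσ_neg_one_mul_pσ_one_mul_pσ_neg_one,
    dissipator_self_apply_of_anticommute pσ_zero_mul_pσ_neg_one, pσ_zero_mul_self, mul_one,
    lie_pσ_neg_one_HL]
  module

theorem stmt10 (d1 d0 dm1 : ℂ) (h0 : d0.re = 0) (hm1 : dm1.re = 0) :
    Lop d1 d0 dm1 (pσ (-1)) =
      (-(d1.re : ℂ) - Complex.I * ((d1.im : ℂ) - (dm1.im : ℂ))) • pσ (-1) := by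
  simp [stmt10_general, h0, hm1]
end
end
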